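/- Let G be a finitely generated virtually free group with generating set {s₁,…,sₙ}, and let G' be a group. There exists an existential first-order formula ψ(x₁,…,x₂ₙ) in the language of groups with 2n free variables such that for all group homomorphisms φ, φ' : G → G', the following are equivalent: (1) φ and φ' are equivalent, i.e. φ ∼ φ'; (2) G' satisfies ψ(φ(s₁),…,φ(sₙ),φ'(s₁),…,φ'(sₙ)). -/

import Mathlib

open FirstOrder Language

/-- Function symbols of the first-order language of groups:
a binary multiplication, a unary inverse and a constant for the identity. -/
inductive GroupFunc : ℕ → Type
  | mul : GroupFunc 2
  | inv : GroupFunc 1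
  | one : GroupFunc 0

/-- The first-order language of groups. -/
def groupLang : FirstOrder.Language :=
  { Functions := GroupFunc
    Relations := fun _ => Empty }

/-- Every group is a structure for the language of groups in the natural way. -/
instance groupLangStructure (G : Type*) [Group G] : groupLang.Structure G where
  funMap {n} f v :=
    match f with
    | .mul => v 0 * v 1
    | .inv => (v 0)⁻¹
    | .one => 1
  RelMap {n} r _ := r.elim

/-- Existential formulas: iterated existential quantifications of a
quantifier-free formula. -/
inductive IsExistentialQF {α : Type*} : ∀ {n : ℕ}, groupLang.BoundedFormula α n → Prop
  | of_isQF {n : ℕ} {φ : groupLang.BoundedFormula α n} (h : φ.IsQF) : IsExistentialQF φ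
  | ex {n : ℕ} {φ : groupLang.BoundedFormula α (n + 1)} (h : IsExistentialQF φ) :
      IsExistentialQF φ.ex

/-- Universal formulas: iterated universal quantifications of a
quantifier-free formula. -/
inductive IsUniversalQF {α : Type*} : ∀ {n : ℕ}, groupLang.BoundedFormula α n → Prop
  | of_isQF {n : ℕ} {φ : groupLang.BoundedFormula α n} (h : φ.IsQF) : IsUniversalQF φ
  | all {n : ℕ} {φ : groupLang.BoundedFormula α (n + 1)} (h : IsUniversalQF φ) :
      IsUniversalQF φ.all

/-- ∀∃-formulas: iterated universal quantifications of an existential formula. -/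
inductive IsAE {α : Type*} : ∀ {n : ℕ}, groupLang.BoundedFormula α n → Prop
  | of_existential {n : ℕ} {φ : groupLang.BoundedFormula α n} (h : IsExistentialQF φ) : IsAE φ
  | all {n : ℕ} {φ : groupLang.BoundedFormula α (n + 1)} (h : IsAE φ) : IsAE φ.all

/-- A group is virtually free if it has a free subgroup of finite index. -/
def VirtuallyFree (G : Type*) [Group G] : Prop :=
  ∃ H : Subgroup G, H.FiniteIndex ∧ Nonempty (IsFreeGroup H)

/-- A group is co-Hopfian if every injective endomorphism is surjective. -/
def CoHopfian (G : Type*) [Group G] : Prop :=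
  ∀ φ : G →* G, Function.Injective φ → Function.Surjective φ

/-- Two homomorphisms `φ, φ' : G → G'` are equivalent if they coincide up to
conjugation on every finite subgroup of `G`. -/
def HomEquiv {G G' : Type*} [Group G] [Group G'] (φ φ' : G →* G') : Prop :=
  ∀ H : Subgroup G, (H : Set G).Finite →
    ∃ g' : G', ∀ h ∈ H, φ' h = g' * φ h * g'⁻¹

/-- Two groups are ∀∃-equivalent if they satisfy the same ∀∃-sentences. -/
def AEEquivalent (G : Type*) (G' : Type*) [Group G] [Group G'] : Prop :=
  ∀ φ : groupLang.Sentence, IsAE φ → (G ⊨ φ ↔ G' ⊨ φ)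

/-- Two groups are ∃-equivalent if they satisfy the same existential sentences. -/
def ExistentiallyEquivalent (G : Type*) (G' : Type*) [Group G] [Group G'] : Prop :=
  ∀ φ : groupLang.Sentence, IsExistentialQF φ → (G ⊨ φ ↔ G' ⊨ φ)

/-- An endomorphism is rigid-testing: `G` is rigid if every endomorphism
equivalent to the identity is an automorphism. -/
def Rigid (G : Type*) [Group G] : Prop :=
  ∀ φ : G →* G, HomEquiv φ (MonoidHom.id G) → Function.Bijective φ

/-- `Out G` is finite, expressed as: the inner automorphisms form a finite index
subgroup of `Aut G`. -/
def OutFinite (G : Type*) [Group G] : Prop :=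
  (MulAut.conj : G →* MulAut G).range.FiniteIndex

/-- Iterated composition of an endomorphism. -/
def homPow {G : Type*} [Group G] (φ : G →* G) : ℕ → (G →* G)
  | 0 => MonoidHom.id G
  | n + 1 => φ.comp (homPow φ n)

/-- An endomorphism `φ` of `G` is class-permuting if some positive power of `φ`
is equivalent to the identity of `G`. -/
def ClassPermuting {G : Type*} [Group G] (φ : G →* G) : Prop :=
  ∃ n : ℕ, 1 ≤ n ∧ HomEquiv (homPow φ n) (MonoidHom.id G)

/-- A maximal finite subgroup: a finite subgroup maximal with respect to
inclusion among finite subgroups. -/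
def MaximalFiniteSubgroup {G : Type*} [Group G] (A : Subgroup G) : Prop :=
  (A : Set G).Finite ∧ ∀ B : Subgroup G, (B : Set G).Finite → A ≤ B → A = B

/-- Two subgroups are conjugate. -/
def SubgroupConj {G : Type*} [Group G] (A B : Subgroup G) : Prop :=
  ∃ g : G, B = A.map (MulAut.conj g).toMonoidHom

/-- A group is strongly co-Hopfian if there is a finite subset `F` of
`G \ {1}` such that every endomorphism whose kernel misses `F` is an
automorphism. -/
def StronglyCoHopfian (G : Type*) [Group G] : Prop :=
  ∃ F : Finset G, (1 : G) ∉ F ∧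
    ∀ φ : G →* G, (∀ f ∈ F, φ f ≠ 1) → Function.Bijective φ

/-- A group is finitely presented. -/
def GroupFinitelyPresented (G : Type*) [Group G] : Prop :=
  ∃ (n : ℕ) (rels : Finset (FreeGroup (Fin n))),
    Nonempty (PresentedGroup (rels : Set (FreeGroup (Fin n))) ≃* G)

/-! The Cayley graph of a virtually free group is coarsely a tree, so two far apart vertices have a
coarse midpoint: a vertex that, seen from any third vertex, is closer than one of the two. A centre
of smallest radius for an orbit of a finite subgroup is therefore moved a bounded distance by that
subgroup, and conjugating the centre to `1` puts the subgroup inside a fixed finite ball. Hence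
there are only finitely many conjugacy classes of finite subgroups. Since `φ ∼ φ'` need only be
tested on one representative `K` of each class, it says that there are elements `g_K` of `G'`
satisfying finitely many equations `φ' k = g_K * φ k * g_K⁻¹` with `k ∈ K`, in which `φ k` and
`φ' k` are words in the images of the generators. -/

section FreeGroup

variable {α : Type*}

theorem isReduced_invRev_append_iff {L₁ L₂ : List (α × Bool)}
    (h₁ : FreeGroup.IsReduced (FreeGroup.invRev L₁)) (h₂ : FreeGroup.IsReduced L₂) :
    FreeGroup.IsReduced (FreeGroup.invRev L₁ ++ L₂) ↔ ∀ a ∈ L₁.head?, a ∉ L₂.head? := by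
  have hlast : (FreeGroup.invRev L₁).getLast? = L₁.head?.map fun a => (a.1, !a.2) := by
    rw [FreeGroup.invRev, List.getLast?_reverse, List.head?_map]
  simp only [FreeGroup.IsReduced, List.isChain_append, hlast, Option.mem_map, forall_exists_index,
    and_imp, forall_apply_eq_imp_iff₂]
  refine ⟨fun h a ha ha' => by simpa using h.2.2 a ha a ha', fun h => ⟨h₁, h₂, ?_⟩⟩
  rintro ⟨x, e⟩ ha ⟨y, f⟩ hb rfl
  rcases e.eq_or_eq_not f with rfl | rfl
  · exact absurd hb (h _ ha)
  · exact Bool.not_not f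

theorem finite_of_fg_freeGroup [Group.FG (FreeGroup α)] : Finite α := by
  have : Group.FG (Abelianization (FreeGroup α)) :=
    Group.fg_of_surjective (f := Abelianization.of) Quotient.mk''_surjective
  have : AddGroup.FG (FreeAbelianGroup α) := AddGroup.fg_iff_mul_fg.2 this
  have : Module.Finite ℤ (FreeAbelianGroup α) := Module.Finite.iff_addGroup_fg.2 this
  exact Module.Finite.finite_basis (FreeAbelianGroup.basis α)

variable [DecidableEq α]

/-- `z` lies on the geodesic from `p` to `q` in the Cayley tree of a free group, whose metric is
`(p, q) ↦ ‖p⁻¹ * q‖`. -/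
def IsBetween (z p q : FreeGroup α) : Prop :=
  (p⁻¹ * q).norm = (z⁻¹ * p).norm + (z⁻¹ * q).norm

theorem norm_inv_mul_eq_add_iff (p q : FreeGroup α) :
    (p⁻¹ * q).norm = p.norm + q.norm ↔ ∀ a ∈ p.toWord.head?, a ∉ q.toWord.head? := by
  have hp : FreeGroup.IsReduced (FreeGroup.invRev p.toWord) :=
    FreeGroup.toWord_inv p ▸ FreeGroup.isReduced_toWord
  rw [← isReduced_invRev_append_iff hp FreeGroup.isReduced_toWord, ← FreeGroup.toWord_inv,
    FreeGroup.isReduced_iff_reduce_eq, ← FreeGroup.toWord_mul]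
  rw [← FreeGroup.norm_inv_eq (x := p)]
  simp only [FreeGroup.norm, ← List.length_append]
  exact ⟨(FreeGroup.toWord_mul_sublist _ _).eq_of_length, congrArg List.length⟩

theorem isBetween_iff_head? {z p q : FreeGroup α} :
    IsBetween z p q ↔ ∀ a ∈ (z⁻¹ * p).toWord.head?, a ∉ (z⁻¹ * q).toWord.head? := by
  rw [← norm_inv_mul_eq_add_iff, IsBetween]
  group

theorem IsBetween.or_of_tripod {z p q : FreeGroup α} (h : IsBetween z p q) (x : FreeGroup α) :
    IsBetween z p x ∨ IsBetween z x q := by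
  simp only [isBetween_iff_head?] at h ⊢
  by_contra! ⟨⟨a, hap, hax⟩, b, hbx, hbq⟩
  obtain rfl : a = b := Option.mem_unique hax hbx
  exact h a hap hbq

theorem IsBetween.symm {z p q : FreeGroup α} (h : IsBetween z p q) : IsBetween z q p := by
  rw [isBetween_iff_head?] at h ⊢
  exact fun a hq hp => h a hp hq

theorem IsBetween.norm_left_le {z p q : FreeGroup α} (h : IsBetween z p q) :
    (p⁻¹ * z).norm ≤ (p⁻¹ * q).norm := by
  rw [h, ← FreeGroup.norm_inv_eq, mul_inv_rev, inv_inv]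
  exact Nat.le_add_right _ _

theorem exists_geodesic (p q : FreeGroup α) :
    ∃ z : ℕ → FreeGroup α, z 0 = p ∧ (∃ n, z n = q) ∧
      (∀ k, ((z k)⁻¹ * z (k + 1)).norm ≤ 1) ∧ ∀ k, IsBetween (z k) p q := by
  set w := (p⁻¹ * q).toWord
  have hmk : FreeGroup.mk w = p⁻¹ * q := FreeGroup.mk_toWord
  refine ⟨fun k => p * FreeGroup.mk (w.take k), ?_, ⟨w.length, ?_⟩, fun k => ?_, fun k => ?_⟩
  · simp [← FreeGroup.one_eq_mk]
  · simp [hmk]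
  · have hsucc : FreeGroup.mk (w.take (k + 1)) =
        FreeGroup.mk (w.take k) * FreeGroup.mk w[k]?.toList := by
      rw [List.take_add_one, FreeGroup.mul_mk]
    simp only [hsucc, mul_inv_rev, mul_assoc, inv_mul_cancel_left]
    exact FreeGroup.norm_mk_le.trans Option.length_toList_le
  · have hsplit : FreeGroup.mk (w.take k) * FreeGroup.mk (w.drop k) = p⁻¹ * q := by
      rw [FreeGroup.mul_mk, List.take_append_drop, hmk]
    have hp : (p * FreeGroup.mk (w.take k))⁻¹ * p = (FreeGroup.mk (w.take k))⁻¹ := by group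
    have hq : (p * FreeGroup.mk (w.take k))⁻¹ * q = FreeGroup.mk (w.drop k) := by
      rw [mul_inv_rev, mul_assoc, ← hsplit, inv_mul_cancel_left]
    rw [IsBetween, hp, hq, FreeGroup.norm_inv_eq]
    refine le_antisymm (hsplit ▸ FreeGroup.norm_mul_le _ _) ?_
    calc (FreeGroup.mk (w.take k)).norm + (FreeGroup.mk (w.drop k)).norm
        ≤ (w.take k).length + (w.drop k).length :=
          add_le_add FreeGroup.norm_mk_le FreeGroup.norm_mk_le
      _ = (p⁻¹ * q).norm := by rw [← List.length_append, List.take_append_drop]; rfl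

theorem exists_forall_le_mul_norm [Finite α] {ℓ : FreeGroup α → ℕ} (hone : ℓ 1 = 0)
    (hmul : ∀ u v, ℓ (u * v) ≤ ℓ u + ℓ v) : ∃ C, ∀ w, ℓ w ≤ C * w.norm := by
  obtain ⟨C, hC⟩ := (Set.finite_range fun a => ℓ (FreeGroup.mk [a])).bddAbove
  refine ⟨C, fun w => ?_⟩
  suffices hword : ∀ L : List (α × Bool), ℓ (FreeGroup.mk L) ≤ C * L.length by
    simpa only [FreeGroup.norm, FreeGroup.mk_toWord] using hword w.toWord
  intro L
  induction L with
  | nil => simp [← FreeGroup.one_eq_mk, hone]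
  | cons a L ih =>
    calc ℓ (FreeGroup.mk (a :: L)) = ℓ (FreeGroup.mk [a] * FreeGroup.mk L) := by
          rw [FreeGroup.mul_mk, List.singleton_append]
      _ ≤ ℓ (FreeGroup.mk [a]) + ℓ (FreeGroup.mk L) := hmul _ _
      _ ≤ C + C * L.length := add_le_add (hC ⟨a, rfl⟩) ih
      _ = C * (a :: L).length := by rw [List.length_cons]; ring

end FreeGroup

section Midpoints

/-- Two points at distance more than `D` have a coarse midpoint `m`: seen from any point `x`, it is
strictly nearer than the farther of the two. -/
def HasCoarseMidpoints {X : Type*} (d : X → X → ℕ) (D : ℕ) : Prop :=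
  ∀ a b, D < d a b → ∃ m, ∀ x, d x m < max (d x a) (d x b)

-- A point minimizing the radius of an orbit is moved at most `D`, since a coarse midpoint between
-- it and a far translate would have a smaller radius.
theorem HasCoarseMidpoints.exists_forall_smul_le {X H : Type*} [Nonempty X] [Group H] [Finite H]
    [MulAction H X] {d : X → X → ℕ} {D : ℕ} (hd : HasCoarseMidpoints d D)
    (hinv : ∀ (h : H) x y, d (h • x) (h • y) = d x y) :
    ∃ c : X, ∀ h : H, d c (h • c) ≤ D := by
  have := Fintype.ofFinite H
  let o : X := Classical.arbitrary X
  let radius (c : X) : ℕ := Finset.univ.sup' Finset.univ_nonempty fun h : H => d (h • o) c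
  have le_radius (c : X) (h : H) : d (h • o) c ≤ radius c :=
    Finset.le_sup' (fun h : H => d (h • o) c) (Finset.mem_univ h)
  refine ⟨Function.argmin radius, fun h => ?_⟩
  set c := Function.argmin radius
  by_contra! hlt
  obtain ⟨m, hm⟩ := hd _ _ hlt
  refine Function.not_lt_argmin radius m ((Finset.sup'_lt_iff _).2 fun k _ => ?_)
  have htranslate : d (k • o) (h • c) ≤ radius c := by
    rw [← hinv h⁻¹, inv_smul_smul, smul_smul]
    exact le_radius c _
  exact (hm (k • o)).trans_le (max_le (le_radius c k) htranslate)

end Midpoints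

section CoarseTreeRetract

variable {X α : Type*} [DecidableEq α]

/-- A graph is a coarse retract of the Cayley tree of a free group: `π` and `j` are Lipschitz maps
into and out of the tree, and `j ∘ π` is close to the identity. One constant `C` serves for all
three bounds. -/
structure IsCoarseTreeRetract (Γ : SimpleGraph X) (π : X → FreeGroup α) (j : FreeGroup α → X)
    (C : ℕ) : Prop where
  dist_comp_le : ∀ x, Γ.dist x (j (π x)) ≤ C
  norm_le_of_adj : ∀ {x y}, Γ.Adj x y → ((π x)⁻¹ * π y).norm ≤ C
  dist_le_mul_norm : ∀ u v, Γ.dist (j u) (j v) ≤ C * (u⁻¹ * v).norm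

namespace IsCoarseTreeRetract

variable {Γ : SimpleGraph X} {π : X → FreeGroup α} {j : FreeGroup α → X} {C : ℕ}

theorem dist_le_of_isBetween (h : IsCoarseTreeRetract Γ π j C) (hΓ : Γ.Connected) {x : X}
    {z q : FreeGroup α} (hz : IsBetween z (π x) q) (hq : ((π x)⁻¹ * q).norm ≤ C) :
    Γ.dist x (j z) ≤ C + C * C :=
  calc Γ.dist x (j z) ≤ Γ.dist x (j (π x)) + Γ.dist (j (π x)) (j z) := hΓ.dist_triangle
    _ ≤ C + C * ((π x)⁻¹ * z).norm := add_le_add (h.dist_comp_le x) (h.dist_le_mul_norm _ _)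
    _ ≤ C + C * C := by gcongr; exact hz.norm_left_le.trans hq

theorem dist_add_dist_le_length (h : IsCoarseTreeRetract Γ π j C) (hΓ : Γ.Connected) {x y : X}
    (p : Γ.Walk x y) {z : FreeGroup α} (hz : IsBetween z (π x) (π y)) :
    Γ.dist x (j z) + Γ.dist y (j z) ≤ p.length + 2 * (C + C * C) := by
  induction p with
  | nil =>
    have := h.dist_le_of_isBetween hΓ hz (by simp)
    rw [SimpleGraph.Walk.length_nil]
    lia
  | @cons x x' y hadj p ih =>
    rw [SimpleGraph.Walk.length_cons]
    rcases hz.or_of_tripod (π x') with hnear | hfar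
    · have hx := h.dist_le_of_isBetween hΓ hnear (h.norm_le_of_adj hadj)
      have hy : Γ.dist y (j z) ≤ Γ.dist y x + Γ.dist x (j z) := hΓ.dist_triangle
      have hyx : Γ.dist y x ≤ p.length + 1 := Γ.dist_comm ▸ Γ.dist_le (p.cons hadj)
      lia
    · have hx : Γ.dist x (j z) ≤ Γ.dist x x' + Γ.dist x' (j z) := hΓ.dist_triangle
      have hxx' : Γ.dist x x' = 1 := SimpleGraph.dist_eq_one_iff_adj.2 hadj
      have := ih hfar
      lia

theorem dist_add_dist_le (h : IsCoarseTreeRetract Γ π j C) (hΓ : Γ.Connected) {x y : X}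
    {z : FreeGroup α} (hz : IsBetween z (π x) (π y)) :
    Γ.dist x (j z) + Γ.dist y (j z) ≤ Γ.dist x y + 2 * (C + C * C) := by
  obtain ⟨p, hp⟩ := hΓ.exists_walk_length_eq_dist x y
  exact hp ▸ h.dist_add_dist_le_length hΓ p hz

theorem exists_isBetween_far (h : IsCoarseTreeRetract Γ π j C) (hΓ : Γ.Connected) {R : ℕ}
    (hR : C ≤ R) {a b : X} (hab : 2 * R + C < Γ.dist a b) :
    ∃ z, IsBetween z (π a) (π b) ∧ R < Γ.dist a (j z) ∧ R < Γ.dist b (j z) := by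
  obtain ⟨z, hz0, ⟨n, hzn⟩, hstep, hbtw⟩ := exists_geodesic (π a) (π b)
  have hfar : R < Γ.dist a (j (z n)) := by
    have hb : Γ.dist b (j (π b)) ≤ C := h.dist_comp_le b
    have htri : Γ.dist a b ≤ Γ.dist a (j (π b)) + Γ.dist (j (π b)) b := hΓ.dist_triangle
    rw [Γ.dist_comm (u := j (π b))] at htri
    rw [hzn]
    lia
  obtain ⟨k, hk, hk'⟩ : ∃ k, Γ.dist a (j (z k)) ≤ R ∧ R < Γ.dist a (j (z (k + 1))) := by
    by_contra! hstay
    have hnear (k : ℕ) : Γ.dist a (j (z k)) ≤ R := by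
      induction k with
      | zero => exact hz0 ▸ (h.dist_comp_le a).trans hR
      | succ k ih => exact hstay k ih
    exact (hnear n).not_gt hfar
  refine ⟨z (k + 1), hbtw _, hk', ?_⟩
  have hnext : Γ.dist (j (z k)) (j (z (k + 1))) ≤ C :=
    (h.dist_le_mul_norm _ _).trans (mul_le_of_le_one_right (Nat.zero_le C) (hstep k))
  have h₁ : Γ.dist a (j (z (k + 1))) ≤ Γ.dist a (j (z k)) + Γ.dist (j (z k)) (j (z (k + 1))) :=
    hΓ.dist_triangle
  have h₂ : Γ.dist a b ≤ Γ.dist a (j (z (k + 1))) + Γ.dist (j (z (k + 1))) b := hΓ.dist_triangle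
  rw [Γ.dist_comm (u := j (z (k + 1))) (v := b)] at h₂
  lia

theorem hasCoarseMidpoints (h : IsCoarseTreeRetract Γ π j C) (hΓ : Γ.Connected) :
    HasCoarseMidpoints Γ.dist (4 * (C + C * C) + C) := by
  intro a b hab
  obtain ⟨z, hz, ha, hb⟩ :=
    h.exists_isBetween_far hΓ (R := 2 * (C + C * C)) (by lia) (a := a) (b := b) (by lia)
  refine ⟨j z, fun x => lt_max_iff.2 ?_⟩
  refine (hz.or_of_tripod (π x)).imp (fun hax => ?_) fun hxb => ?_
  · have := h.dist_add_dist_le hΓ hax.symm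
    lia
  · have := h.dist_add_dist_le hΓ hxb
    lia

end IsCoarseTreeRetract

end CoarseTreeRetract

section CayleyGraph

open scoped Pointwise

theorem finite_setOf_dist_le {V : Type*} {Γ : SimpleGraph V} (hΓ : Γ.Connected)
    (hfin : ∀ v, (Γ.neighborSet v).Finite) (v : V) (n : ℕ) : {u | Γ.dist u v ≤ n}.Finite := by
  induction n with
  | zero =>
    refine (Set.finite_singleton v).subset fun u hu => ?_
    exact hΓ.dist_eq_zero_iff.1 (Nat.le_zero.1 hu)
  | succ n ih =>
    refine ((Set.finite_singleton v).union (ih.biUnion fun w _ => hfin w)).subset fun u hu => ?_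
    obtain ⟨p, hp⟩ := hΓ.exists_walk_length_eq_dist u v
    cases p with
    | nil => exact Or.inl rfl
    | @cons _ w _ hadj p =>
      refine Or.inr (Set.mem_biUnion (x := w) ?_ hadj.symm)
      have hlen : p.length + 1 ≤ n + 1 := (SimpleGraph.Walk.length_cons hadj p ▸ hp).trans_le hu
      exact (Γ.dist_le p).trans (Nat.le_of_succ_le_succ hlen)

variable {G : Type*} [Group G] {S : Set G}

theorem mulCayley_edist_mul_le (g x y : G) :
    (SimpleGraph.mulCayley S).edist (g * x) (g * y) ≤ (SimpleGraph.mulCayley S).edist x y := by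
  let f : SimpleGraph.mulCayley S →g SimpleGraph.mulCayley S :=
    ⟨(g * ·), SimpleGraph.mulCayley_adj_mul_iff_right.2⟩
  refine le_iInf fun p => ?_
  rw [← p.length_map f]
  exact SimpleGraph.edist_le _

theorem mulCayley_dist_mul_left (g x y : G) :
    (SimpleGraph.mulCayley S).dist (g * x) (g * y) = (SimpleGraph.mulCayley S).dist x y := by
  refine congrArg ENat.toNat ((mulCayley_edist_mul_le g x y).antisymm ?_)
  simpa only [inv_mul_cancel_left] using mulCayley_edist_mul_le g⁻¹ (g * x) (g * y)

theorem mulCayley_dist_eq_dist_one (x y : G) :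
    (SimpleGraph.mulCayley S).dist x y = (SimpleGraph.mulCayley S).dist 1 (x⁻¹ * y) := by
  rw [← mulCayley_dist_mul_left x⁻¹, inv_mul_cancel]

theorem mulCayley_connected (hS : Subgroup.closure S = ⊤) :
    (SimpleGraph.mulCayley S).Connected := by
  have hstep {x s : G} (hs : s ∈ S) : (SimpleGraph.mulCayley S).Reachable x (x * s) := by
    by_cases h : x = x * s
    · rw [← h]
    · refine SimpleGraph.Adj.reachable ((SimpleGraph.mulCayley_adj S _ _).2 ⟨h, Or.inl ?_⟩)
      rwa [inv_mul_cancel_left]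
  refine (SimpleGraph.connected_iff_exists_forall_reachable _).2 ⟨1, fun g => ?_⟩
  induction hS ▸ Subgroup.mem_top g using Subgroup.closure_induction_right with
  | one => rfl
  | mul_right x _ s hs ih => exact ih.trans (hstep hs)
  | mul_inv_cancel x _ s hs ih =>
    refine ih.trans (SimpleGraph.Reachable.symm ?_)
    simpa only [inv_mul_cancel_right] using hstep (x := x * s⁻¹) hs

theorem inv_mul_mem_of_mulCayley_adj {x y : G} (h : (SimpleGraph.mulCayley S).Adj x y) :
    x⁻¹ * y ∈ S ∪ S⁻¹ := by
  refine ((SimpleGraph.mulCayley_adj S x y).1 h).2.imp_right fun hyx => ?_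
  rwa [Set.mem_inv, mul_inv_rev, inv_inv]

theorem mulCayley_neighborSet_finite (hS : S.Finite) (g : G) :
    ((SimpleGraph.mulCayley S).neighborSet g).Finite :=
  ((hS.union hS.inv).image (g * ·)).subset fun x hx =>
    ⟨g⁻¹ * x, inv_mul_mem_of_mulCayley_adj hx, mul_inv_cancel_left g x⟩

end CayleyGraph

section FiniteIndexFreeSubgroup

open scoped Pointwise

variable {G α : Type*} [Group G] [DecidableEq α]

theorem exists_isCoarseTreeRetract [Finite α] {S : Set G} (hS : S.Finite)
    (hgen : Subgroup.closure S = ⊤) {j : FreeGroup α →* G} (hj : Function.Injective j)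
    [j.range.FiniteIndex] :
    ∃ π C, IsCoarseTreeRetract (SimpleGraph.mulCayley S) π j C := by
  have hΓ := mulCayley_connected hgen
  set Γ := SimpleGraph.mulCayley S
  obtain ⟨T, hT, -⟩ := j.range.exists_isComplement_right 1
  have hTfin : T.Finite := hT.finite_right
  have hfactor (x : G) : ∃ w, ∃ t ∈ T, j w * t = x := by
    obtain ⟨w, hw⟩ := (hT.equiv x).1.2
    exact ⟨w, (hT.equiv x).2, (hT.equiv x).2.2, hw ▸ hT.equiv_fst_mul_equiv_snd x⟩
  choose π τ hτ hπ using hfactor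
  have hτ_eq (x : G) : τ x = (j (π x))⁻¹ * x := eq_inv_mul_of_mul_eq (hπ x)
  have hbdd : ((j ⁻¹' (T * (S ∪ S⁻¹) * T⁻¹)).image FreeGroup.norm).Finite :=
    (((hTfin.mul (hS.union hS.inv)).mul hTfin.inv).preimage hj.injOn).image _
  obtain ⟨C₁, hC₁⟩ := (hTfin.image fun t => Γ.dist 1 t).bddAbove
  obtain ⟨C₂, hC₂⟩ := hbdd.bddAbove
  obtain ⟨C₃, hC₃⟩ := exists_forall_le_mul_norm (ℓ := fun w => Γ.dist 1 (j w)) (by simp)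
    fun u v => by
      rw [← inv_mul_cancel_left u v, map_mul j u⁻¹, map_inv, ← mulCayley_dist_eq_dist_one,
        mul_inv_cancel_left]
      exact hΓ.dist_triangle
  refine ⟨π, max C₁ (max C₂ C₃), fun x => ?_, fun {x y} hxy => ?_, fun u v => ?_⟩
  · rw [Γ.dist_comm, mulCayley_dist_eq_dist_one, ← hτ_eq]
    exact le_max_of_le_left (hC₁ ⟨_, hτ x, rfl⟩)
  · have hword : j ((π x)⁻¹ * π y) = τ x * (x⁻¹ * y) * (τ y)⁻¹ := by
      rw [hτ_eq, hτ_eq, map_mul, map_inv]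
      group
    refine le_max_of_le_right (le_max_of_le_left (hC₂ ⟨_, ?_, rfl⟩))
    rw [Set.mem_preimage, hword]
    exact Set.mul_mem_mul (Set.mul_mem_mul (hτ x) (inv_mul_mem_of_mulCayley_adj hxy))
      (Set.inv_mem_inv.2 (hτ y))
  · rw [mulCayley_dist_eq_dist_one, ← map_inv, ← map_mul]
    exact (hC₃ _).trans (by gcongr; exact le_max_of_le_right (le_max_right _ _))

end FiniteIndexFreeSubgroup

section FiniteSubgroups

variable {G : Type*} [Group G]

/-- The finite subgroups of `G` fall into finitely many conjugacy classes, recorded by a finite set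
of finite subgroups that meets every class. -/
def FinitelyManyFiniteSubgroupClasses (G : Type*) [Group G] : Prop :=
  ∃ 𝓗 : Set (Subgroup G), 𝓗.Finite ∧ (∀ K ∈ 𝓗, (K : Set G).Finite) ∧
    ∀ H : Subgroup G, (H : Set G).Finite → ∃ K ∈ 𝓗, SubgroupConj H K

theorem HasCoarseMidpoints.finitelyManyFiniteSubgroupClasses {S : Set G} (hS : S.Finite)
    (hgen : Subgroup.closure S = ⊤) {D : ℕ}
    (hD : HasCoarseMidpoints (SimpleGraph.mulCayley S).dist D) :
    FinitelyManyFiniteSubgroupClasses G := by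
  have hΓ := mulCayley_connected hgen
  let B : Set G := {g | (SimpleGraph.mulCayley S).dist g 1 ≤ D}
  have hB : B.Finite := finite_setOf_dist_le hΓ (mulCayley_neighborSet_finite hS) 1 D
  refine ⟨{K | (K : Set G) ⊆ B}, hB.finite_subsets.preimage SetLike.coe_injective.injOn,
    fun K hK => hB.subset hK, fun H hH => ?_⟩
  have : Finite H := hH
  obtain ⟨c, hc⟩ := hD.exists_forall_smul_le (H := H) fun h => mulCayley_dist_mul_left (h : G)
  refine ⟨H.map (MulAut.conj c⁻¹).toMonoidHom, ?_, c⁻¹, rfl⟩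
  rintro _ ⟨h, hh, rfl⟩
  change (SimpleGraph.mulCayley S).dist (c⁻¹ * h * c⁻¹⁻¹) 1 ≤ D
  rw [inv_inv, mul_assoc, SimpleGraph.dist_comm, ← mulCayley_dist_eq_dist_one]
  exact hc ⟨h, hh⟩

theorem finitelyManyFiniteSubgroupClasses_of_freeGroup [hfg : Group.FG G] {α : Type*}
    {j : FreeGroup α →* G} (hj : Function.Injective j) [j.range.FiniteIndex] :
    FinitelyManyFiniteSubgroupClasses G := by
  classical
  have : Group.FG j.range := Subgroup.fg_of_index_ne_zero _
  have : Group.FG (FreeGroup α) :=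
    Group.fg_of_surjective (f := (MonoidHom.ofInjective hj).symm.toMonoidHom)
      (MonoidHom.ofInjective hj).symm.surjective
  have : Finite α := finite_of_fg_freeGroup
  obtain ⟨S, hgen⟩ := Group.fg_def.1 hfg
  obtain ⟨π, C, hπ⟩ := exists_isCoarseTreeRetract S.finite_toSet hgen hj
  exact (hπ.hasCoarseMidpoints (mulCayley_connected hgen)).finitelyManyFiniteSubgroupClasses
    S.finite_toSet hgen

theorem VirtuallyFree.finitelyManyFiniteSubgroupClasses [Group.FG G] (hvf : VirtuallyFree G) :
    FinitelyManyFiniteSubgroupClasses G := by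
  obtain ⟨F, hF, ⟨hfree⟩⟩ := hvf
  let e := IsFreeGroup.mulEquiv F
  let j : FreeGroup _ →* G := F.subtype.comp e.toMonoidHom
  have hrange : j.range = F := by
    rw [MonoidHom.range_comp, MonoidHom.range_eq_top.2 e.surjective, ← MonoidHom.range_eq_map,
      Subgroup.range_subtype]
  have : j.range.FiniteIndex := by rwa [hrange]
  exact finitelyManyFiniteSubgroupClasses_of_freeGroup (j := j)
    (F.subtype_injective.comp e.injective)

theorem homEquiv_iff_forall_mem_representatives {G' : Type*} [Group G'] {𝓗 : Set (Subgroup G)}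
    (hfin : ∀ K ∈ 𝓗, (K : Set G).Finite)
    (hrep : ∀ H : Subgroup G, (H : Set G).Finite → ∃ K ∈ 𝓗, SubgroupConj H K) {φ φ' : G →* G'} :
    HomEquiv φ φ' ↔ ∀ K : 𝓗, ∃ g' : G', ∀ k ∈ K.1, φ' k = g' * φ k * g'⁻¹ := by
  refine ⟨fun h K => h K (hfin K K.2), fun h H hH => ?_⟩
  obtain ⟨_, hK, c, rfl⟩ := hrep H hH
  obtain ⟨g', hg'⟩ := h ⟨_, hK⟩
  refine ⟨(φ' c)⁻¹ * g' * φ c, fun k hk => ?_⟩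
  have hconj : φ' (c * k * c⁻¹) = g' * φ (c * k * c⁻¹) * g'⁻¹ := hg' _ ⟨k, hk, rfl⟩
  calc φ' k = (φ' c)⁻¹ * φ' (c * k * c⁻¹) * φ' c := by simp only [map_mul, map_inv]; group
    _ = (φ' c)⁻¹ * (g' * φ (c * k * c⁻¹) * g'⁻¹) * φ' c := by rw [hconj]
    _ = (φ' c)⁻¹ * g' * φ c * φ k * ((φ' c)⁻¹ * g' * φ c)⁻¹ := by
      simp only [map_mul, map_inv]; group

end FiniteSubgroups

section ExistentialFormulas

universe w

theorem isQF_iInf {L : FirstOrder.Language} {α β : Type*} {n : ℕ} [Finite β]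
    {f : β → L.BoundedFormula α n} (h : ∀ b, (f b).IsQF) : (BoundedFormula.iInf f).IsQF := by
  let := Fintype.ofFinite β
  have hfoldr (l : List (L.BoundedFormula α n)) (hl : ∀ φ ∈ l, φ.IsQF) :
      (l.foldr (· ⊓ ·) ⊤).IsQF := by
    induction l with
    | nil => exact .top
    | cons φ l ih =>
      rw [List.forall_mem_cons] at hl
      exact hl.1.inf (ih hl.2)
  exact hfoldr _ (List.forall_mem_map.2 fun b _ => h b)

theorem IsExistentialQF.exs {α : Type*} {n : ℕ} {φ : groupLang.BoundedFormula α n}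
    (h : IsExistentialQF φ) : IsExistentialQF φ.exs := by
  induction n with
  | zero => exact h
  | succ n ih => exact ih h.ex

theorem isExistentialQF_iExs {α β : Type*} [Finite β] {φ : groupLang.Formula (α ⊕ β)}
    (h : φ.IsQF) : IsExistentialQF (φ.iExs β) :=
  (IsExistentialQF.of_isQF (h.relabel _)).exs

theorem exists_term_realize_eq {G ι : Type*} [Group G] {s : ι → G}
    (hs : Subgroup.closure (Set.range s) = ⊤) (g : G) :
    ∃ t : groupLang.Term ι, ∀ (G' : Type w) [Group G'] (φ : G →* G') (v : ι → G'),
      (∀ i, v i = φ (s i)) → t.realize v = φ g := by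
  induction hs ▸ Subgroup.mem_top g using Subgroup.closure_induction with
  | mem _ hx =>
    obtain ⟨i, rfl⟩ := hx
    exact ⟨.var i, fun _ _ _ _ hv => hv i⟩
  | one => exact ⟨Constants.term GroupFunc.one, fun _ _ φ _ _ => (map_one φ).symm⟩
  | mul x y _ _ hx hy =>
    obtain ⟨t, ht⟩ := hx
    obtain ⟨u, hu⟩ := hy
    refine ⟨Functions.apply₂ GroupFunc.mul t u, fun G' _ φ v hv => ?_⟩
    rw [map_mul, ← ht G' φ v hv, ← hu G' φ v hv]
    rfl
  | inv x _ hx =>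
    obtain ⟨t, ht⟩ := hx
    refine ⟨Functions.apply₁ GroupFunc.inv t, fun G' _ φ v hv => ?_⟩
    rw [map_inv, ← ht G' φ v hv]
    rfl

theorem exists_isQF_realize_iff_conj {G ι α : Type*} [Group G] {s : ι → G}
    (hs : Subgroup.closure (Set.range s) = ⊤) (x y : ι → α) (z : α) (g : G) :
    ∃ θ : groupLang.Formula α, θ.IsQF ∧
      ∀ (G' : Type w) [Group G'] (φ φ' : G →* G') (v : α → G'), (∀ i, v (x i) = φ (s i)) →
        (∀ i, v (y i) = φ' (s i)) → (θ.Realize v ↔ φ' g = v z * φ g * (v z)⁻¹) := by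
  obtain ⟨t, ht⟩ := exists_term_realize_eq hs g
  refine ⟨Term.equal (Functions.apply₂ GroupFunc.mul (t.relabel y) (.var z))
    (Functions.apply₂ GroupFunc.mul (.var z) (t.relabel x)),
    (BoundedFormula.IsAtomic.equal _ _).isQF, fun G' _ φ φ' v hx hy => ?_⟩
  rw [Formula.realize_equal, eq_mul_inv_iff_mul_eq, ← ht G' φ (v ∘ x) hx, ← ht G' φ' (v ∘ y) hy,
    ← Term.realize_relabel, ← Term.realize_relabel]
  rfl

theorem exists_existential_formula_homEquiv_general {G ι α : Type*} [Group G] {s : ι → G}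
    (hs : Subgroup.closure (Set.range s) = ⊤) (hG : FinitelyManyFiniteSubgroupClasses G)
    (x y : ι → α) :
    ∃ ψ : groupLang.Formula α, IsExistentialQF ψ ∧
      ∀ (G' : Type w) [Group G'] (φ φ' : G →* G') (v : α → G'), (∀ i, v (x i) = φ (s i)) →
        (∀ i, v (y i) = φ' (s i)) → (HomEquiv φ φ' ↔ ψ.Realize v) := by
  obtain ⟨𝓗, h𝓗, hfin, hrep⟩ := hG
  have : Finite 𝓗 := h𝓗
  have (K : 𝓗) : Finite K.1 := hfin K K.2
  choose θ hqf hθ using fun p : Σ K : 𝓗, K.1 =>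
    exists_isQF_realize_iff_conj hs (α := α ⊕ 𝓗) (.inl ∘ x) (.inl ∘ y) (.inr p.1) p.2
  refine ⟨(Formula.iInf θ).iExs 𝓗, isExistentialQF_iExs (isQF_iInf hqf),
    fun G' _ φ φ' v hx hy => ?_⟩
  have hconj (g' : 𝓗 → G') : (Formula.iInf θ).Realize (Sum.elim v g') ↔
      ∀ K : 𝓗, ∀ k ∈ K.1, φ' k = g' K * φ k * (g' K)⁻¹ := by
    rw [Formula.realize_iInf, Sigma.forall]
    refine forall_congr' fun K => Subtype.forall.trans (forall₂_congr fun k hk => ?_)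
    exact hθ ⟨K, k, hk⟩ G' φ φ' (Sum.elim v g') hx hy
  rw [Formula.realize_iExs, exists_congr hconj, homEquiv_iff_forall_mem_representatives hfin hrep]
  exact Classical.skolem

end ExistentialFormulas

/-- There is an existential formula in `2n` variables expressing, over any group
`G'`, that two homomorphisms `φ, φ' : G → G'` are equivalent, in terms of the
images of a fixed generating tuple of `G`. -/
theorem exists_existential_formula_homEquiv
    (G : Type*) (G' : Type*) [Group G] [Group G']
    (hfg : Group.FG G) (hvf : VirtuallyFree G)
    (n : ℕ) (s : Fin n → G) (hs : Subgroup.closure (Set.range s) = ⊤) :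
    ∃ ψ : groupLang.Formula (Fin (n + n)), IsExistentialQF ψ ∧
      ∀ φ φ' : G →* G',
        (HomEquiv φ φ' ↔
          ψ.Realize (Fin.append (fun i => φ (s i)) (fun i => φ' (s i)))) := by
  obtain ⟨ψ, hψ, h⟩ := exists_existential_formula_homEquiv_general hs
    hvf.finitelyManyFiniteSubgroupClasses (Fin.castAdd n) (Fin.natAdd n)
  exact ⟨ψ, hψ, fun φ φ' => h G' φ φ' _ (Fin.append_left _ _) (Fin.append_right _ _)⟩
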